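/- arXiv:math/9806068 — 2 statements merged into one kernel-verified Lean document; each statement's English description precedes it below -/
import Mathlib

section
/- The 'wanted term' of the Bethe ansatz takes eigenvalue form: let ψ̌ be a function of λ̌ with values in W̌[0] and set g(λ) = G(λ)ψ̌(λ̌). Define g₀(λ) = [a^{(m)}(t_m-z; λ_1-γ, λ̌) a^{(m-1)}(t_{m-1}-z; λ_1-γ, λ̌+γȟ^{(m)}) ⋯ a^{(1)}(t_1-z; λ_1-γ, λ̌+γ∑_{k=2}^m ȟ^{(k)})] g(λ_1-γ, λ̌) + tr^{(0)}[ a^{(0)}(z-t_1; λ_1-ℓγ, λ̌) a^{(0)}(z-t_2; λ_1-(ℓ+1)γ, λ̌) ⋯ a^{(0)}(z-t_m; λ_1-(ℓ+m-1)γ, λ̌) Φ̂^{(0)}(z) Ř^{(0m)}(z-t_m, λ̌) Ř^{(0,m-1)}(z-t_{m-1}, λ̌+γȟ^{(m)}) ⋯ Ř^{(01)}(z-t_1, λ̌+γ∑_{k=2}^m ȟ^{(k)}) ] g(λ). Then g₀(λ) = G(λ) [ S₊(z;t_1,…,t_m) e^{-γc_1} + (θ(z)/θ(z-Nℓγ))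 S₋(z;t_1,…,t_m) 𝒯̌^{(m,m-1,…,1)}(z) ] ψ̌(λ̌). -/
/-!
The two summands of `g₀` are handled separately, and only the oddness of `θ` is needed, besides
telescoping products.

* First summand: on a zero-weight basis vector `f`, the numbers `cntGT f p` for `f p = a` run
  exactly once through `0, …, ℓ-1` (`prod_cntGT`), so the `λ`-dependent parts of the factors `1/α`
  turn `G(λ - γω₁)` into `e^{-γc₁} G(λ)` factor by factor, while the `z`-dependent parts give `S₊`
  (`first_term`).
* Second summand: the `λ`-dependent parts of `∏ 1/α`, of `Φ_j` and of `G(λ - γω_j)/G(λ)` cancel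
  after telescoping, leaving `θ(z)/θ(z-Nℓγ) · S₋` (`second_coeff`).
* The R-matrix conserves the total weight `ω_i + ∑ ω_{f r}` (`cR0k_wt`), so on states of weight
  `ω_j + ℓ∑ω_a` the argument `λ̌ + γℓ∑ω_a - γ∑_{r<k} ȟ^{(r)}` occurring in the transfer matrix
  equals `λ̌ - γω_j + γ∑_{r>k} ȟ^{(r)}` up to `γ(ȟ^{(0)} + ȟ^{(k)})`.  The matrix `Ř^{(0k)}` is
  invariant under the latter shift since it depends only on the difference of the two components
  labelled by its two tensor factors (`Rm_shift`).  Hence the two ordered products agree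
  (`cProd_eq`).
-/

noncomputable section

open Complex BigOperators

namespace Ruijsenaars

/-- Jacobi's first theta function
`θ(z) = -∑_{j∈ℤ} exp(πi(j+1/2)²τ + 2πi(j+1/2)(z+1/2))`. -/
def theta (τ z : ℂ) : ℂ :=
  - ∑' j : ℤ, Complex.exp (Real.pi * Complex.I * ((j : ℂ) + 1 / 2) ^ 2 * τ +
      2 * Real.pi * Complex.I * ((j : ℂ) + 1 / 2) * (z + 1 / 2))

/-- `α(z,w) = θ(z)θ(w+γ)/(θ(z-γ)θ(w))`. -/
def alpha (τ γ z w : ℂ) : ℂ :=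
  theta τ z * theta τ (w + γ) / (theta τ (z - γ) * theta τ w)

/-- `β(z,w) = -θ(z+w)θ(γ)/(θ(z-γ)θ(w))`. -/
def beta (τ γ z w : ℂ) : ℂ :=
  - (theta τ (z + w) * theta τ γ / (theta τ (z - γ) * theta τ w))

/-- The elliptic dynamical R-matrix `R(z,λ)` on `ℂ^N ⊗ ℂ^N`,
`R(z,λ) = ∑_i e_{ii}⊗e_{ii} + ∑_{i≠j} α(z,λ_i-λ_j) e_{ii}⊗e_{jj}
        + ∑_{i≠j} β(z,λ_i-λ_j) e_{ij}⊗e_{ji}`,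
written as a matrix on the standard basis of `ℂ^N ⊗ ℂ^N`: the entry at row `(i,j)`,
column `(k,l)` is the coefficient `R_{ik,jl}(z,λ)` of `e_{ik} ⊗ e_{jl}`. -/
def Rm (τ γ : ℂ) {N : ℕ} (z : ℂ) (lam : Fin N → ℂ) :
    Matrix (Fin N × Fin N) (Fin N × Fin N) ℂ := fun p q =>
  if p = q then (if p.1 = p.2 then 1 else alpha τ γ z (lam p.1 - lam p.2))
  else if p.1 = q.2 ∧ p.2 = q.1 then beta τ γ z (lam p.1 - lam p.2) else 0

/-- The shift `λ ↦ λ - γ ω_j` by the `j`-th standard basis vector. -/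
def shift1 (γ : ℂ) {N : ℕ} (lam : Fin N → ℂ) (j : Fin N) : Fin N → ℂ :=
  fun i => lam i - if i = j then γ else 0

/-- The embedding of the index set `{2,…,N}` (encoded as `Fin (N-1)`) into
`{1,…,N}` (encoded as `Fin N`). -/
def iot {N : ℕ} (k : Fin (N - 1)) : Fin N := ⟨k.1 + 1, by omega⟩

/-- `Ř^{(0k)}(zz, λ̌ + cc·∑_{r∈S} ȟ^{(r)})` acting on `ℂ^{N-1} ⊗ W̌`,
`W̌ = (ℂ^{N-1})^{⊗m}`; the dynamical argument is evaluated via the weights of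
the tensor factors in `S`. -/
def cR0k (τ γ zz cc : ℂ) {N mm : ℕ} (lc : Fin (N - 1) → ℂ) (k : Fin mm)
    (S : Finset (Fin mm)) :
    Matrix (Fin (N - 1) × (Fin mm → Fin (N - 1)))
      (Fin (N - 1) × (Fin mm → Fin (N - 1))) ℂ := fun p q =>
  if ∀ j, j ≠ k → p.2 j = q.2 j then
    Rm τ γ zz (fun i => lc i + cc * (((S.filter (fun r => q.2 r = i)).card : ℕ) : ℂ))
      (p.1, p.2 k) (q.1, q.2 k)
  else 0

/-- The ordered product
`Ř^{(0,k_1)}(z-t_{k_1}, λ̌ + cc·∑_{r=2}^m ȟ^{(k_r)}) ⋯ Ř^{(0,k_m)}(z-t_{k_m}, λ̌)`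
over a sequence `(k_1,…,k_m)`. -/
def cProd (τ γ z cc : ℂ) {N mm : ℕ} (lc : Fin (N - 1) → ℂ) (t : Fin mm → ℂ) :
    List (Fin mm) →
      Matrix (Fin (N - 1) × (Fin mm → Fin (N - 1)))
        (Fin (N - 1) × (Fin mm → Fin (N - 1))) ℂ
  | [] => 1
  | k :: rest => cR0k τ γ (z - t k) cc lc k rest.toFinset * cProd τ γ z cc lc t rest

/-- The total shift `Γ̌^{(1,…,m)}` (for `sign = -1`), resp. its inverse
(for `sign = 1`), acting on `W̌`-valued functions of `λ ∈ ℂ^N`. -/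
def gammaTot (γ sign : ℂ) {N mm : ℕ}
    (ψ : (Fin N → ℂ) → (Fin mm → Fin (N - 1)) → ℂ) :
    (Fin N → ℂ) → (Fin mm → Fin (N - 1)) → ℂ := fun lam f =>
  ψ (fun a => lam a + sign * γ *
      (((Finset.univ.filter (fun k => iot (f k) = a)).card : ℕ) : ℂ)) f

/-- The nested transfer matrix `𝒯̌^{(k_1,…,k_m)}(z)`, defined by
`Γ̌^{(1,…,m)} 𝒯̌^{(k_1,…,k_m)}(z) (Γ̌^{(1,…,m)})⁻¹
 = tr^{(0)}[Ř^{(0,k_1)}(z-t_{k_1}, λ̌-γ∑_{r≥2}ȟ^{(k_r)}) ⋯ Ř^{(0,k_m)}(z-t_{k_m}, λ̌) Γ̌^{(0)}]`. -/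
def cTransfer (τ γ : ℂ) {N mm : ℕ} (t : Fin mm → ℂ) (ks : List (Fin mm)) (z : ℂ)
    (ψ : (Fin N → ℂ) → (Fin mm → Fin (N - 1)) → ℂ) :
    (Fin N → ℂ) → (Fin mm → Fin (N - 1)) → ℂ :=
  gammaTot γ 1 (fun lam f =>
    ∑ j : Fin (N - 1), ∑ g,
      cProd τ γ z (-γ) (fun a => lam (iot a)) t ks (j, f) (j, g) *
        (gammaTot γ (-1) ψ) (shift1 γ lam (iot j)) g)

/-- The sequence `(m, m-1, …, 1)`. -/
def seqRev (mm : ℕ) : List (Fin mm) := (List.finRange mm).reverse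

/-- `G(λ) = e^{c₁λ₁} ∏_{j=2}^N ∏_{p=1}^ℓ θ(λ₁-λ_j-pγ)`. -/
def Gfun (τ γ c1 : ℂ) (ℓ : ℕ) {N : ℕ} [NeZero N] (lam : Fin N → ℂ) : ℂ :=
  Complex.exp (c1 * lam 0) *
    ∏ j : Fin (N - 1), ∏ p ∈ Finset.Icc 1 ℓ, theta τ (lam 0 - lam (iot j) - (p : ℂ) * γ)

/-- For a basis vector `f` of `W̌` and a tensor position `p`, the number of
positions `k > p` with `f k = f p` (the dynamical shift `∑_{k>p} ȟ^{(k)}`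
evaluated on `f` at the index carried by the factor `p`). -/
def cntGT {mm K : ℕ} (f : Fin mm → Fin K) (p : Fin mm) : ℕ :=
  (Finset.univ.filter (fun k => p < k ∧ f k = f p)).card

/-- `Φ_j(z,λ) = θ(z)θ(λ_j-λ_1+dγ)/(θ(z-dγ)θ(λ_j-λ_1))` with `d = Nℓ`,
`j = 2,…,N`. -/
def PhiFn (τ γ : ℂ) (d : ℕ) {N : ℕ} [NeZero N] (z : ℂ) (lam : Fin N → ℂ)
    (j : Fin (N - 1)) : ℂ :=
  theta τ z * theta τ (lam (iot j) - lam 0 + (d : ℂ) * γ) /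
    (theta τ (z - (d : ℂ) * γ) * theta τ (lam (iot j) - lam 0))

/-- The product `Ř^{(0m)}(z-t_m, λ̌) Ř^{(0,m-1)}(z-t_{m-1}, λ̌+γȟ^{(m)}) ⋯
Ř^{(01)}(z-t_1, λ̌+γ∑_{k=2}^m ȟ^{(k)})` on `ℂ^{N-1} ⊗ W̌`. -/
def plusProd (τ γ z : ℂ) {N mm : ℕ} (t : Fin mm → ℂ) (lc : Fin (N - 1) → ℂ) :
    Matrix (Fin (N - 1) × (Fin mm → Fin (N - 1)))
      (Fin (N - 1) × (Fin mm → Fin (N - 1))) ℂ :=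
  (((List.finRange mm).reverse).map
    (fun k => cR0k τ γ (z - t k) γ lc k (Finset.univ.filter (fun r => k < r)))).prod

/-! ### The theta function and scalar products -/

lemma theta_neg (τ z : ℂ) : theta τ (-z) = -theta τ z := by
  unfold theta
  congr 1
  -- The substitution `j ↦ -1 - j` sends `j + 1/2` to its negative.
  rw [← (Equiv.subLeft (-1 : ℤ)).tsum_eq, ← tsum_neg]
  refine tsum_congr fun j => ?_
  rw [neg_eq_neg_one_mul (Complex.exp _), ← Complex.exp_pi_mul_I, ← Complex.exp_add,
    Complex.exp_eq_exp_iff_exists_int]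
  refine ⟨-j - 1, ?_⟩
  simp only [Equiv.subLeft_apply]
  push_cast
  ring

lemma theta_sub_comm (τ x y : ℂ) : theta τ (x - y) = -theta τ (y - x) := by
  rw [← theta_neg, neg_sub]

lemma inv_alpha (τ γ z w : ℂ) :
    (alpha τ γ z w)⁻¹ = theta τ (z - γ) / theta τ z * (theta τ w / theta τ (w + γ)) := by
  unfold alpha
  rw [inv_div, mul_div_mul_comm]

/-- The number of larger elements enumerates a finite chain. -/
lemma prod_card_gt {m : ℕ} (F : ℕ → ℂ) (s : Finset (Fin m)) :
    ∏ p ∈ s, F (s.filter (fun k => p < k)).card = ∏ c ∈ Finset.range s.card, F c := by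
  induction s using Finset.induction_on_min with
  | empty => simp
  | insert a s hlt ih =>
    have ha : a ∉ s := fun h => lt_irrefl _ (hlt a h)
    rw [Finset.prod_insert ha, Finset.card_insert_of_notMem ha, Finset.prod_range_succ, ← ih,
      mul_comm]
    congr 1
    · refine Finset.prod_congr rfl fun p hp => ?_
      rw [Finset.filter_insert, if_neg (not_lt.2 (hlt p hp).le)]
    · rw [Finset.filter_insert, if_neg (lt_irrefl a), Finset.filter_true_of_mem hlt]

/-- On a zero-weight basis vector the pairs `(f p, cntGT f p)` enumerate each `(a, c)` with
`c < L` exactly once. -/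
lemma prod_cntGT {m K : ℕ} (L : ℕ) (f : Fin m → Fin K)
    (hf : ∀ a, (Finset.univ.filter (fun k => f k = a)).card = L) (F : Fin K → ℕ → ℂ) :
    ∏ p, F (f p) (cntGT f p) = ∏ a, ∏ c ∈ Finset.range L, F a c := by
  rw [← Finset.prod_fiberwise (s := Finset.univ) (g := f)]
  refine Finset.prod_congr rfl fun a _ => ?_
  rw [← hf a, ← prod_card_gt]
  refine Finset.prod_congr rfl fun p hp => ?_
  obtain rfl : f p = a := by simpa using hp
  unfold cntGT
  rw [Finset.filter_filter]
  simp only [and_comm]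

lemma prod_Icc_one (L : ℕ) (F : ℕ → ℂ) :
    ∏ p ∈ Finset.Icc 1 L, F p = ∏ c ∈ Finset.range L, F (c + 1) := by
  rw [Finset.range_eq_Ico, Finset.prod_Ico_add' F 0 L 1]
  rfl

lemma prod_ratio (m : ℕ) (F : ℕ → ℂ) (h : ∀ c ≤ m, F c ≠ 0) :
    ∏ c ∈ Finset.range m, F c / F (c + 1) = F 0 / F m := by
  induction m with
  | zero => simp [h 0 le_rfl]
  | succ k ih =>
    rw [Finset.prod_range_succ, ih fun c hc => h c (by omega), div_mul_div_cancel₀ (h k (by omega))]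

lemma iot_ne_zero {M : ℕ} (j : Fin (M + 1)) : (iot j : Fin (M + 2)) ≠ 0 :=
  Fin.succ_ne_zero j

lemma iot_injective {N : ℕ} : Function.Injective (iot : Fin (N - 1) → Fin N) := by
  intro a b h
  simpa [iot, Fin.ext_iff] using h

/-- The `a`-factors turn `G(λ - γω₁)` into `S₊ e^{-γc₁} G(λ)` on zero-weight vectors. -/
lemma first_term (τ γ c1 z : ℂ) (M L m : ℕ) (t : Fin m → ℂ) (lam : Fin (M + 2) → ℂ)
    (hne : ∀ (a : Fin (M + 1)) (c : ℕ), c ≤ L + 1 →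
      theta τ (lam (iot a) - lam 0 + c * γ) ≠ 0)
    (f : Fin m → Fin (M + 1))
    (hf : ∀ a, (Finset.univ.filter (fun k => f k = a)).card = L) :
    (∏ p, (alpha τ γ (t p - z)
        ((lam (iot (f p)) + γ * ((cntGT f p : ℕ) : ℂ)) - (lam 0 - γ)))⁻¹) *
      Gfun τ γ c1 L (shift1 γ lam 0) =
    Gfun τ γ c1 L lam * ((∏ k, theta τ (z - t k + γ) / theta τ (z - t k)) *
      Complex.exp (-(γ * c1))) := by
  simp only [inv_alpha]
  rw [Finset.prod_mul_distrib]
  have h1 : ∀ p, theta τ (t p - z - γ) / theta τ (t p - z) =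
      theta τ (z - t p + γ) / theta τ (z - t p) := fun p => by
    rw [theta_sub_comm τ (t p) z, show t p - z - γ = -(z - t p + γ) by ring, theta_neg, neg_div_neg_eq]
  rw [Finset.prod_congr rfl fun p _ => h1 p]
  rw [prod_cntGT L f hf (fun a c => theta τ (lam (iot a) + γ * (c : ℂ) - (lam 0 - γ)) /
    theta τ (lam (iot a) + γ * (c : ℂ) - (lam 0 - γ) + γ))]
  have hG : (∏ a : Fin (M + 1), ∏ c ∈ Finset.range L,
      theta τ (lam (iot a) + γ * (c : ℂ) - (lam 0 - γ)) /
        theta τ (lam (iot a) + γ * (c : ℂ) - (lam 0 - γ) + γ)) *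
      (∏ j : Fin (M + 1), ∏ p ∈ Finset.Icc 1 L,
        theta τ (lam 0 - γ - lam (iot j) - (p : ℂ) * γ)) =
      ∏ j : Fin (M + 1), ∏ p ∈ Finset.Icc 1 L, theta τ (lam 0 - lam (iot j) - (p : ℂ) * γ) := by
    rw [← Finset.prod_mul_distrib]
    refine Finset.prod_congr rfl fun a _ => ?_
    rw [prod_Icc_one, prod_Icc_one, ← Finset.prod_mul_distrib]
    refine Finset.prod_congr rfl fun c hc => ?_
    have hc' : c < L := Finset.mem_range.1 hc
    have h := hne a (c + 2) (by omega)
    push_cast at h ⊢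
    rw [show lam (iot a) + γ * (c : ℂ) - (lam 0 - γ) + γ = lam (iot a) - lam 0 + (c + 2) * γ by ring,
      show lam 0 - γ - lam (iot a) - ((c : ℂ) + 1) * γ = -(lam (iot a) - lam 0 + (c + 2) * γ) by ring,
      show lam 0 - lam (iot a) - ((c : ℂ) + 1) * γ = -(lam (iot a) + γ * (c : ℂ) - (lam 0 - γ)) by ring,
      theta_neg, theta_neg, mul_neg, div_mul_cancel₀ _ h]
  have hs : Gfun τ γ c1 L (shift1 γ lam 0) = Complex.exp (c1 * lam 0) * Complex.exp (-(γ * c1)) *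
      ∏ j : Fin (M + 1), ∏ p ∈ Finset.Icc 1 L,
        theta τ (lam 0 - γ - lam (iot j) - (p : ℂ) * γ) := by
    unfold Gfun
    rw [← Complex.exp_add]
    congr 1
    · simp only [shift1, if_true]
      ring_nf
    · refine Finset.prod_congr rfl fun j _ => Finset.prod_congr rfl fun p _ => ?_
      simp only [shift1, if_true]
      rw [if_neg (iot_ne_zero j), sub_zero]
  have hg : Gfun τ γ c1 L lam = Complex.exp (c1 * lam 0) *
      ∏ j : Fin (M + 1), ∏ p ∈ Finset.Icc 1 L, theta τ (lam 0 - lam (iot j) - (p : ℂ) * γ) := rfl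
  rw [hs, hg, ← hG]
  ring

/-- Under `λ ↦ λ - γω_j` the product over `p` in `G` telescopes. -/
lemma Gfun_shift (τ γ c1 : ℂ) (M L : ℕ) (lam : Fin (M + 2) → ℂ) (j : Fin (M + 1)) :
    Gfun τ γ c1 L (shift1 γ lam (iot j)) * theta τ (lam 0 - lam (iot j) - L * γ) =
      Gfun τ γ c1 L lam * theta τ (lam 0 - lam (iot j)) := by
  have key : (∏ p ∈ Finset.Icc 1 L, theta τ (lam 0 - (lam (iot j) - γ) - (p : ℂ) * γ)) *
      theta τ (lam 0 - lam (iot j) - L * γ) =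
      (∏ p ∈ Finset.Icc 1 L, theta τ (lam 0 - lam (iot j) - (p : ℂ) * γ)) *
        theta τ (lam 0 - lam (iot j)) := by
    rw [prod_Icc_one, prod_Icc_one]
    have e := Finset.prod_range_succ' (fun c : ℕ => theta τ (lam 0 - lam (iot j) - (c : ℂ) * γ)) L
    rw [Finset.prod_range_succ] at e
    simp only [Nat.cast_zero, zero_mul, sub_zero] at e
    rw [← e]
    congr 1
    refine Finset.prod_congr rfl fun c _ => ?_
    push_cast
    ring_nf
  have h0 : shift1 γ lam (iot j) 0 = lam 0 := by
    simp [shift1, (iot_ne_zero j).symm]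
  have hg (μ : Fin (M + 2) → ℂ) : Gfun τ γ c1 L μ = Complex.exp (c1 * μ 0) *
      ∏ i : Fin (M + 1), ∏ p ∈ Finset.Icc 1 L, theta τ (μ 0 - μ (iot i) - (p : ℂ) * γ) := rfl
  rw [hg, hg, h0, ← Finset.mul_prod_erase _ _ (Finset.mem_univ j),
    ← Finset.mul_prod_erase _ _ (Finset.mem_univ j)]
  have he : ∏ i ∈ Finset.univ.erase j, ∏ p ∈ Finset.Icc 1 L,
        theta τ (lam 0 - shift1 γ lam (iot j) (iot i) - (p : ℂ) * γ) =
      ∏ i ∈ Finset.univ.erase j, ∏ p ∈ Finset.Icc 1 L,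
        theta τ (lam 0 - lam (iot i) - (p : ℂ) * γ) := by
    refine Finset.prod_congr rfl fun i hi => Finset.prod_congr rfl fun p _ => ?_
    have hij : (iot i : Fin (M + 2)) ≠ iot j := fun h =>
      Finset.ne_of_mem_erase hi (iot_injective (N := M + 2) h)
    simp [shift1, hij]
  have hj : shift1 γ lam (iot j) (iot j) = lam (iot j) - γ := by simp [shift1]
  rw [he, hj]
  linear_combination Complex.exp (c1 * lam 0) * (∏ i ∈ Finset.univ.erase j,
    ∏ p ∈ Finset.Icc 1 L, theta τ (lam 0 - lam (iot i) - (p : ℂ) * γ)) * key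

/-- All `λ`-dependence of `∏ 1/α`, `Φ_j` and `G(λ - γω_j)/G(λ)` cancels. -/
lemma second_coeff (τ γ c1 z : ℂ) (M L m d : ℕ) (hd : d = L + m) (t : Fin m → ℂ)
    (lam : Fin (M + 2) → ℂ) (j : Fin (M + 1))
    (hne : ∀ (c : ℕ), c ≤ d → theta τ (lam (iot j) - lam 0 + c * γ) ≠ 0) :
    (∏ p : Fin m, (alpha τ γ (z - t p)
        (lam (iot j) - (lam 0 - ((L : ℂ) + (p.1 : ℂ)) * γ)))⁻¹) *
      PhiFn τ γ d z lam j * Gfun τ γ c1 L (shift1 γ lam (iot j)) =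
    Gfun τ γ c1 L lam * (theta τ z / theta τ (z - (d : ℂ) * γ) *
      ∏ k, theta τ (z - t k - γ) / theta τ (z - t k)) := by
  simp only [inv_alpha]
  rw [Finset.prod_mul_distrib]
  have h2 : (∏ p : Fin m, theta τ (lam (iot j) - (lam 0 - ((L : ℂ) + (p.1 : ℂ)) * γ)) /
      theta τ (lam (iot j) - (lam 0 - ((L : ℂ) + (p.1 : ℂ)) * γ) + γ)) =
      theta τ (lam (iot j) - lam 0 + L * γ) / theta τ (lam (iot j) - lam 0 + d * γ) := by
    have h := prod_ratio m (fun c => theta τ (lam (iot j) - lam 0 + ((L + c : ℕ) : ℂ) * γ))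
      (fun c hc => hne (L + c) (by omega))
    rw [← hd, add_zero, ← Fin.prod_univ_eq_prod_range (fun c =>
      theta τ (lam (iot j) - lam 0 + ((L + c : ℕ) : ℂ) * γ) /
      theta τ (lam (iot j) - lam 0 + ((L + (c + 1) : ℕ) : ℂ) * γ))] at h
    rw [← h]
    refine Finset.prod_congr rfl fun p _ => ?_
    push_cast
    ring_nf
  rw [h2]
  have hG := Gfun_shift τ γ c1 M L lam j
  rw [show lam 0 - lam (iot j) - L * γ = -(lam (iot j) - lam 0 + L * γ) by ring, theta_neg,
    theta_sub_comm τ (lam 0)] at hG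
  have n0 := hne 0 (Nat.zero_le _)
  rw [Nat.cast_zero, zero_mul, add_zero] at n0
  have nL := hne L (by omega)
  have nd := hne d le_rfl
  have hG' : Gfun τ γ c1 L (shift1 γ lam (iot j)) =
      Gfun τ γ c1 L lam * theta τ (lam (iot j) - lam 0) /
        theta τ (lam (iot j) - lam 0 + L * γ) := by
    rw [eq_div_iff nL]
    linear_combination -hG
  rw [hG']
  unfold PhiFn
  rw [mul_div_mul_comm]
  generalize theta τ (lam (iot j) - lam 0 + L * γ) = x at *
  generalize theta τ (lam (iot j) - lam 0 + d * γ) = y at *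
  generalize theta τ (lam (iot j) - lam 0) = w at *
  field_simp

/-! ### Weight conservation and the ordered products of R-matrices -/

/-- The coefficient of `ω_a` in the weight of the basis vector `p = e_i ⊗ e_{f 1} ⊗ ⋯ ⊗ e_{f m}`
of the auxiliary space tensored with `W̌`. -/
def wt {K m : ℕ} (p : Fin K × (Fin m → Fin K)) (a : Fin K) : ℕ :=
  (if p.1 = a then 1 else 0) + (Finset.univ.filter (fun r => p.2 r = a)).card

/-- `R(z,λ)` is unchanged when `λ` is shifted by `γ` times the weight of the vector it is
applied to. -/
lemma Rm_shift (τ γ z : ℂ) {N : ℕ} (μ ν : Fin N → ℂ) (p q : Fin N × Fin N)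
    (h : ∀ a, μ a = ν a + γ * ((if q.1 = a then 1 else 0) + (if q.2 = a then 1 else 0))) :
    Rm τ γ z μ p q = Rm τ γ z ν p q := by
  obtain ⟨i, i'⟩ := p
  obtain ⟨k, k'⟩ := q
  have e : (i = k ∧ i' = k' ∨ i = k' ∧ i' = k) → i ≠ i' → μ i - μ i' = ν i - ν i' := by
    rintro (⟨rfl, rfl⟩ | ⟨rfl, rfl⟩) hne <;> rw [h, h] <;> simp [hne, hne.symm]
  unfold Rm
  by_cases h1 : ((i, i') : Fin N × Fin N) = (k, k')
  · rw [if_pos h1, if_pos h1]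
    rw [Prod.mk.injEq] at h1
    by_cases h2 : i = i'
    · simp [h2]
    · simp only [h2, if_false]
      rw [e (Or.inl h1) h2]
  · rw [if_neg h1, if_neg h1]
    by_cases h2 : i = k' ∧ i' = k
    · have h3 : i ≠ i' := by
        rintro rfl
        exact h1 (by rw [← h2.1, ← h2.2])
      simp only [h2, and_self, if_true]
      rw [← h2.1, ← h2.2, e (Or.inr h2) h3]
    · simp [h2]

lemma card_split {m K : ℕ} (f : Fin m → Fin K) (k : Fin m) (a : Fin K) :
    (Finset.univ.filter (fun r => f r = a)).card =
      (if f k = a then 1 else 0) + ∑ r ∈ Finset.univ.erase k, if f r = a then 1 else 0 := by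
  rw [Finset.card_filter, Finset.add_sum_erase _ (fun r => if f r = a then 1 else 0)
    (Finset.mem_univ k)]

/-- The R-matrix acting on the auxiliary space and the `k`-th factor conserves the weight. -/
lemma cR0k_wt (τ γ zz cc : ℂ) {N m : ℕ} (lc : Fin (N - 1) → ℂ) (k : Fin m) (S : Finset (Fin m))
    (p q : Fin (N - 1) × (Fin m → Fin (N - 1))) (h : cR0k τ γ zz cc lc k S p q ≠ 0) :
    wt p = wt q := by
  unfold cR0k at h
  split_ifs at h with h1
  swap
  · exact absurd rfl h
  funext a
  unfold wt
  rw [card_split p.2 k, card_split q.2 k]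
  have hs : (∑ r ∈ Finset.univ.erase k, if p.2 r = a then 1 else 0) =
      ∑ r ∈ Finset.univ.erase k, if q.2 r = a then 1 else 0 :=
    Finset.sum_congr rfl fun r hr => by rw [h1 r (Finset.ne_of_mem_erase hr)]
  rw [hs]
  unfold Rm at h
  split_ifs at h with h2 h3 h4
  · rw [Prod.mk.injEq] at h2
    rw [h2.1, h2.2]
  · rw [Prod.mk.injEq] at h2
    rw [h2.1, h2.2]
  · obtain ⟨h5, h6⟩ := h4
    simp only at h5 h6
    rw [h5, h6]
    omega
  · exact absurd rfl h

/-- The counts below, at and above `k` add up to the total one. -/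
lemma wt_split {K m : ℕ} (q : Fin K × (Fin m → Fin K)) (k : Fin m) (a : Fin K) :
    wt q a = (if q.1 = a then 1 else 0) + (if q.2 k = a then 1 else 0) +
      ((Finset.univ.filter (fun r => r < k)).filter (fun r => q.2 r = a)).card +
      ((Finset.univ.filter (fun r => k < r)).filter (fun r => q.2 r = a)).card := by
  have e : (Finset.univ.filter (fun r => q.2 r = a)) =
      ((Finset.univ.filter (fun r => r < k)).filter (fun r => q.2 r = a)) ∪
      ((Finset.univ.filter (fun r => k < r)).filter (fun r => q.2 r = a)) ∪
      (if q.2 k = a then {k} else ∅) := by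
    ext r
    rcases lt_trichotomy r k with h | h | h
    · have := h.ne
      split_ifs <;> simp [h, this]
    · subst h
      split_ifs with h' <;> simp [h']
    · have := h.ne'
      split_ifs <;> simp [h, this]
  unfold wt
  rw [e, Finset.card_union_of_disjoint, Finset.card_union_of_disjoint]
  · split_ifs <;> simp <;> omega
  · rw [Finset.disjoint_left]
    intro r h1 h2
    simp only [Finset.mem_filter, Finset.mem_univ, true_and] at h1 h2
    exact lt_asymm h1.1 h2.1
  · rw [Finset.disjoint_left]
    intro r h1 h2
    split_ifs at h2 with h3
    · rw [Finset.mem_singleton] at h2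
      subst h2
      simp at h1
    · simp at h2

/-- Conservation of weight at a single factor: the shift by the lower positions with base point
`λ̌_A = λ̌_B + γ wt(q)` may be traded for the shift by the upper positions with base point `λ̌_B`,
the remaining `γ(ȟ^{(0)} + ȟ^{(k)})` being invisible to `Ř^{(0k)}`. -/
lemma cR0k_eq (τ γ zz : ℂ) {N m : ℕ} (lA lB : Fin (N - 1) → ℂ) (k : Fin m)
    (p q : Fin (N - 1) × (Fin m → Fin (N - 1))) (hl : ∀ a, lA a = lB a + γ * (wt q a : ℂ)) :
    cR0k τ γ zz (-γ) lA k (Finset.univ.filter (fun r => r < k)) p q =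
      cR0k τ γ zz γ lB k (Finset.univ.filter (fun r => k < r)) p q := by
  unfold cR0k
  congr 1
  apply Rm_shift
  intro a
  rw [hl a, wt_split q k a]
  push_cast
  ring

lemma cR0k_prod_wt (τ γ z cc : ℂ) {N m : ℕ} (lc : Fin (N - 1) → ℂ) (t : Fin m → ℂ)
    (S : Fin m → Finset (Fin m)) (ks : List (Fin m)) (p q : Fin (N - 1) × (Fin m → Fin (N - 1)))
    (h : ((ks.map (fun k => cR0k τ γ (z - t k) cc lc k (S k))).prod) p q ≠ 0) : wt p = wt q := by
  induction ks generalizing p with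
  | nil =>
    by_contra hne
    exact h (Matrix.one_apply_ne fun h => hne (by rw [h]))
  | cons k rest ih =>
    rw [List.map_cons, List.prod_cons, Matrix.mul_apply] at h
    obtain ⟨s, -, h⟩ := Finset.exists_ne_zero_of_sum_ne_zero h
    rw [cR0k_wt _ _ _ _ _ _ _ _ _ (left_ne_zero_of_mul h), ih s (right_ne_zero_of_mul h)]

/-- Along a strictly decreasing sequence exhausting an initial segment of positions, the product
with shifts by the lower factors equals the product with shifts by the upper factors, on columns
whose weight accounts for the difference of the two base points. -/
lemma cProd_eq (τ γ z : ℂ) {N m : ℕ} (lA lB : Fin (N - 1) → ℂ) (t : Fin m → ℂ)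
    (ks : List (Fin m)) (hs : ks.Pairwise (· > ·)) (hlow : ∀ k ∈ ks, ∀ r < k, r ∈ ks)
    (p q : Fin (N - 1) × (Fin m → Fin (N - 1))) (hl : ∀ a, lA a = lB a + γ * (wt q a : ℂ)) :
    cProd τ γ z (-γ) lA t ks p q =
      ((ks.map (fun k => cR0k τ γ (z - t k) γ lB k
        (Finset.univ.filter (fun r => k < r)))).prod) p q := by
  induction ks generalizing p with
  | nil => rfl
  | cons k rest ih =>
    rw [List.pairwise_cons] at hs
    have hset : rest.toFinset = Finset.univ.filter (fun r => r < k) := by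
      ext r
      simp only [List.mem_toFinset, Finset.mem_filter, Finset.mem_univ, true_and]
      refine ⟨fun h => hs.1 r h, fun h => ?_⟩
      exact (List.mem_cons.1 (hlow k List.mem_cons_self r h)).resolve_left h.ne
    have hlow' : ∀ k' ∈ rest, ∀ r < k', r ∈ rest := fun k' hk' r hr =>
      (List.mem_cons.1 (hlow k' (List.mem_cons_of_mem _ hk') r hr)).resolve_left
        (hr.trans (hs.1 k' hk')).ne
    rw [List.map_cons, List.prod_cons, cProd, Matrix.mul_apply, Matrix.mul_apply]
    refine Finset.sum_congr rfl fun r _ => ?_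
    rw [ih hs.2 hlow' r]
    by_cases h0 : ((rest.map (fun k => cR0k τ γ (z - t k) γ lB k
        (Finset.univ.filter (fun r => k < r)))).prod) r q = 0
    · rw [h0, mul_zero, mul_zero]
    · rw [hset, cR0k_eq τ γ (z - t k) lA lB k p r (by rw [cR0k_prod_wt τ γ z γ lB t _ rest r q h0]; exact hl)]

lemma cProd_wt (τ γ z cc : ℂ) {N m : ℕ} (lc : Fin (N - 1) → ℂ) (t : Fin m → ℂ)
    (ks : List (Fin m)) (p q : Fin (N - 1) × (Fin m → Fin (N - 1)))
    (h : cProd τ γ z cc lc t ks p q ≠ 0) : wt p = wt q := by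
  induction ks generalizing p with
  | nil =>
    by_contra hne
    exact h (Matrix.one_apply_ne fun h => hne (by rw [h]))
  | cons k rest ih =>
    rw [cProd, Matrix.mul_apply] at h
    obtain ⟨s, -, h⟩ := Finset.exists_ne_zero_of_sum_ne_zero h
    rw [cR0k_wt _ _ _ _ _ _ _ _ _ (left_ne_zero_of_mul h), ih s (right_ne_zero_of_mul h)]

/-! ### Assembling the traces -/

lemma seqRev_pairwise (m : ℕ) : (seqRev m).Pairwise (· > ·) := by
  unfold seqRev
  rw [List.pairwise_reverse]
  exact List.pairwise_lt_finRange m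

/-- `cProd_eq` for the sequence `(m, …, 1)`, between equal auxiliary states `e_j` and for a
zero-weight vector `g`. -/
lemma cProd_eq_plusProd (τ γ z : ℂ) (M L m : ℕ) (t : Fin m → ℂ) (lam : Fin (M + 2) → ℂ)
    (j : Fin (M + 2 - 1)) (f g : Fin m → Fin (M + 2 - 1))
    (hg : ∀ a, (Finset.univ.filter (fun k => g k = a)).card = L) :
    cProd τ γ z (-γ) (fun a => lam (iot a) + 1 * γ * (L : ℂ)) t (seqRev m) (j, f) (j, g) =
      plusProd τ γ z t (fun a => (shift1 γ lam (iot j)) (iot a)) (j, f) (j, g) := by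
  unfold plusProd
  refine cProd_eq τ γ z _ _ t _ (seqRev_pairwise m) (fun _ _ r _ => by simp [seqRev]) _ _ ?_
  intro a
  have h : ((iot a : Fin (M + 2)) = iot j) ↔ j = a :=
    ⟨fun h => (iot_injective h).symm, fun h => by rw [h]⟩
  simp only [wt, shift1, hg, h]
  push_cast
  split_ifs <;> ring

lemma card_iot {N m : ℕ} (f : Fin m → Fin (N - 1)) (a : Fin (N - 1)) :
    (Finset.univ.filter (fun k => iot (f k) = (iot a : Fin N))).card =
      (Finset.univ.filter (fun k => f k = a)).card := by
  simp only [iot_injective.eq_iff]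

/-- The matrix elements of the two traces agree: the shifts by `±γ` times the weights in the
transfer matrix compensate on `W̌[0]`. -/
lemma transfer_term (τ γ z : ℂ) (M L m : ℕ) (t : Fin m → ℂ) (lam : Fin (M + 2) → ℂ)
    (ψ : (Fin (M + 2 - 1) → ℂ) → (Fin m → Fin (M + 2 - 1)) → ℂ)
    (hψ : ∀ lc f, ¬ (∀ a, (Finset.univ.filter (fun k => f k = a)).card = L) → ψ lc f = 0)
    (f : Fin m → Fin (M + 2 - 1)) :
    cTransfer τ γ t (seqRev m) z (fun l' h => ψ (fun a => l' (iot a)) h) lam f =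
      ∑ j, ∑ g, plusProd τ γ z t (fun a => (shift1 γ lam (iot j)) (iot a)) (j, f) (j, g) *
        ψ (fun a => (shift1 γ lam (iot j)) (iot a)) g := by
  simp only [cTransfer, gammaTot]
  refine Finset.sum_congr rfl fun j _ => Finset.sum_congr rfl fun g _ => ?_
  by_cases hg : ∀ a, (Finset.univ.filter (fun k => g k = a)).card = L
  swap
  · rw [hψ _ _ hg, hψ _ _ hg, mul_zero, mul_zero]
  by_cases hw : wt (j, f) = wt (j, g)
  · have hf : ∀ a, (Finset.univ.filter (fun k => f k = a)).card = L := fun a => by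
      have := congrFun hw a
      simp only [wt] at this
      rw [← hg a]
      omega
    simp only [card_iot, hf]
    rw [cProd_eq_plusProd τ γ z M L m t lam j f g hg]
    congr 2
    funext a
    simp only [shift1, card_iot, hf, hg]
    ring
  · have h1 : ∀ lc, cProd τ γ z (-γ) lc t (seqRev m) (j, f) (j, g) = 0 := fun lc =>
      by_contra fun h => hw (cProd_wt _ _ _ _ _ _ _ _ _ h)
    have h2 : ∀ lc, plusProd τ γ z t lc (j, f) (j, g) = 0 := fun lc =>
      by_contra fun h => hw (cR0k_prod_wt _ _ _ _ _ _ _ _ _ _ h)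
    rw [h1, h2, zero_mul, zero_mul]

lemma sum_sum_factor {ι κ : Type*} [Fintype ι] [Fintype κ] (c H : ι → ℂ) (P φ : ι → κ → ℂ)
    (G T S X : ℂ) (hX : X = ∑ j, ∑ g, P j g * φ j g) (h : ∀ j, c j * H j = G * (T * S)) :
    ∑ j, c j * ∑ g, P j g * (H j * φ j g) = G * (T * (S * X)) := by
  rw [hX, ← mul_assoc T, ← mul_assoc G, Finset.mul_sum]
  refine Finset.sum_congr rfl fun j _ => ?_
  rw [← h, Finset.mul_sum, Finset.mul_sum]
  exact Finset.sum_congr rfl fun g _ => by ring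

lemma add_factor {x y G a b : ℂ} (h1 : x = G * a) (h2 : y = G * b) : x + y = G * (a + b) := by
  rw [h1, h2, mul_add]

/-- the "wanted term" of the Bethe ansatz takes eigenvalue form:
with `g(λ) = G(λ)ψ̌(λ̌)` for a `W̌[0]`-valued `ψ̌`, the expression
`g₀(λ) = [a^{(m)}(t_m-z;λ₁-γ,λ̌) ⋯ a^{(1)}(t_1-z;λ₁-γ,λ̌+γ∑_{k≥2}ȟ^{(k)})] g(λ₁-γ,λ̌)
 + tr^{(0)}[a^{(0)}(z-t_1;λ₁-ℓγ,λ̌) ⋯ a^{(0)}(z-t_m;λ₁-(ℓ+m-1)γ,λ̌) Φ̂^{(0)}(z)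
   Ř^{(0m)}(z-t_m,λ̌) ⋯ Ř^{(01)}(z-t_1,λ̌+γ∑_{k≥2}ȟ^{(k)})] g(λ)`
equals
`G(λ)[S₊(z;t) e^{-γc₁} + (θ(z)/θ(z-Nℓγ)) S₋(z;t) 𝒯̌^{(m,…,1)}(z)] ψ̌(λ̌)`
(`N = M+2`, `ℓ = l+1`, `m = (N-1)ℓ`; `[a(w;μ₁,μ̌)]_{jj} = 1/α(w,μ_j-μ₁)`, the
`Γ_j` inside `Φ̂^{(0)}(z)` shifting the argument of everything to its right). -/
theorem statement13 (τ γ c1 : ℂ) (hτ : 0 < τ.im) (M l : ℕ) (z : ℂ)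
    (t : Fin ((M + 1) * (l + 1)) → ℂ)
    (ψc : (Fin (M + 1) → ℂ) → (Fin ((M + 1) * (l + 1)) → Fin (M + 1)) → ℂ)
    (hψ0 : ∀ lc f, ¬ (∀ a : Fin (M + 1),
      (Finset.univ.filter (fun k => f k = a)).card = l + 1) → ψc lc f = 0)
    (lam : Fin (M + 2) → ℂ)
    (hlam : ∀ c : ℤ, |c| ≤ 3 * ((M + 2) * (l + 1) + 2) →
      ∀ a b : Fin (M + 2), a ≠ b → theta τ (lam a - lam b + c * γ) ≠ 0)
    (hzt : ∀ c : ℤ, |c| ≤ (M + 2) * (l + 1) + 2 →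
      (∀ k, theta τ (z - t k + c * γ) ≠ 0) ∧
      (∀ k k', k ≠ k' → theta τ (t k - t k' + c * γ) ≠ 0) ∧
      (1 ≤ c → theta τ (z - c * γ) ≠ 0)) :
    ∀ f,
      (∏ p : Fin ((M + 1) * (l + 1)),
          (alpha τ γ (t p - z)
            ((lam (iot (f p)) + γ * ((cntGT f p : ℕ) : ℂ)) - (lam 0 - γ)))⁻¹) *
        (Gfun τ γ c1 (l + 1) (shift1 γ lam 0) *
          ψc (fun a => (shift1 γ lam 0) (iot a)) f)
      + (∑ j : Fin (M + 1),
          (∏ p : Fin ((M + 1) * (l + 1)),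
            (alpha τ γ (z - t p)
              (lam (iot j) - (lam 0 - (((l : ℂ) + 1) + (p.1 : ℂ)) * γ)))⁻¹) *
          PhiFn τ γ ((M + 2) * (l + 1)) z lam j *
          ∑ g, plusProd τ γ z t (fun a => (shift1 γ lam (iot j)) (iot a)) (j, f) (j, g) *
            (Gfun τ γ c1 (l + 1) (shift1 γ lam (iot j)) *
              ψc (fun a => (shift1 γ lam (iot j)) (iot a)) g))
      = Gfun τ γ c1 (l + 1) lam *
          ((∏ k : Fin ((M + 1) * (l + 1)), theta τ (z - t k + γ) / theta τ (z - t k)) *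
              Complex.exp (-(γ * c1)) * ψc (fun a => lam (iot a)) f
            + theta τ z / theta τ (z - (((M + 2) * (l + 1) : ℕ) : ℂ) * γ) *
              ((∏ k : Fin ((M + 1) * (l + 1)), theta τ (z - t k - γ) / theta τ (z - t k)) *
                cTransfer τ γ t (seqRev ((M + 1) * (l + 1))) z
                  (fun l' h => ψc (fun a => l' (iot a)) h) lam f)) := by
  intro f
  have hne : ∀ (a : Fin (M + 1)) (c : ℕ), c ≤ (M + 2) * (l + 1) →
      theta τ (lam (iot a) - lam 0 + c * γ) ≠ 0 := fun a c hc => by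
    have h := hlam c (by
      rw [abs_of_nonneg (by positivity)]
      have : (c : ℤ) ≤ (M + 2) * (l + 1) := by exact_mod_cast hc
      linarith [Int.natCast_nonneg c]) (iot a) 0 (iot_ne_zero a)
    simpa using h
  refine add_factor ?_ ?_
  · have e : (fun a => (shift1 γ lam 0) (iot a)) = fun a => lam (iot a) := by
      funext a
      simp [shift1, iot_ne_zero (M := M) a]
    by_cases hf : ∀ a : Fin (M + 1), (Finset.univ.filter (fun k => f k = a)).card = l + 1
    · have h := first_term τ γ c1 z M (l + 1) _ t lam
        (fun a c hc => hne a c (by nlinarith)) f hf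
      rw [← mul_assoc, ← mul_assoc]
      exact congrArg₂ (· * ·) h (congrArg (fun v => ψc v f) e)
    · rw [hψ0 _ _ hf, hψ0 _ _ hf]
      ring
  · refine sum_sum_factor _ _ _ _ _ _ _ _
      (transfer_term τ γ z M (l + 1) _ t lam ψc hψ0 f) fun j => ?_
    have h := second_coeff τ γ c1 z M (l + 1) _ ((M + 2) * (l + 1)) (by ring) t lam j
      (fun c hc => hne j c hc)
    rw [← h]
    push_cast
    rfl
end Ruijsenaars
end
end

section
/- The Ruijsenaars eigenvalue: with t_j^{(0)} = (j-1)γ, the function z ↦ (θ(z-γNℓ)/θ(z-γℓ)) ε_1(z) takes at z = 0 the value e^{-γc_1} (θ(γNℓ)/θ(γℓ)) ∏_{m=1}^{(N-1)ℓ} θ(t_m^{(1)}-γ)/θ(t_m^{(1)}), provided γ, the t_k^{(n)} and ℓ are such that all theta factors occurring in denominators at z = 0 are nonzero. -/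
/-!
Since `θ` is odd, `θ(0) = 0`. For `i ≥ 2` the `i`-th summand of `ε₁` contains the factor
`θ(z - t_1^{(0)}) = θ(z)` in its numerator (from `j = m = 1`), so it vanishes at `z = 0` and only
the summand `i = 1` survives. Oddness then turns each remaining quotient `θ(-a)/θ(-b)` into
`θ(a)/θ(b)`.
-/

noncomputable section

open Complex BigOperators

namespace Ruijsenaars

/-- The eigenvalue
`ε₁(z) = ∑_{i=1}^N e^{-γc_i} ∏_{m=1}^{(N-i)ℓ} θ(z-t_m^{(i)}+γ)/θ(z-t_m^{(i)})
  · ∏_{j=1}^{i-1} (∏_{m=1}^{(N-j)ℓ} θ(z-t_m^{(j)}-γ)/θ(z-t_m^{(j)})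
  · ∏_{m=1}^{(N-j+1)ℓ} θ(z-t_m^{(j-1)})/θ(z-t_m^{(j-1)}-γ))`
(empty products equal 1); `cs j = c_{j+1}` and `T n k = t_{k+1}^{(n)}`. -/
def eps1 (τ γ : ℂ) (N ℓ : ℕ) (cs : ℕ → ℂ) (T : ℕ → ℕ → ℂ) (z : ℂ) : ℂ :=
  ∑ i ∈ Finset.Icc 1 N, Complex.exp (-(γ * cs (i - 1))) *
    (∏ m ∈ Finset.range ((N - i) * ℓ),
      theta τ (z - T i m + γ) / theta τ (z - T i m)) *
    ∏ j ∈ Finset.Icc 1 (i - 1),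
      ((∏ m ∈ Finset.range ((N - j) * ℓ),
          theta τ (z - T j m - γ) / theta τ (z - T j m)) *
        (∏ m ∈ Finset.range ((N - j + 1) * ℓ),
          theta τ (z - T (j - 1) m) / theta τ (z - T (j - 1) m - γ)))

lemma theta_zero (τ : ℂ) : theta τ 0 = 0 := by
  have h := theta_neg τ 0
  rw [neg_zero] at h
  exact self_eq_neg.mp h

lemma theta_neg_div_neg (τ a b : ℂ) : theta τ (-a) / theta τ (-b) = theta τ a / theta τ b := by
  rw [theta_neg, theta_neg, neg_div_neg_eq]

/-- the Ruijsenaars eigenvalue.  With `t_j^{(0)} = (j-1)γ`, the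
function `z ↦ (θ(z-γNℓ)/θ(z-γℓ)) ε₁(z)` takes at `z = 0` the value
`e^{-γc₁} (θ(γNℓ)/θ(γℓ)) ∏_{m=1}^{(N-1)ℓ} θ(t_m^{(1)}-γ)/θ(t_m^{(1)})`,
provided all theta factors occurring in denominators at `z = 0` are nonzero. -/
theorem statement19 (τ γ : ℂ) (hτ : 0 < τ.im) (N ℓ : ℕ) (hN : 2 ≤ N) (hℓ : 1 ≤ ℓ)
    (cs : ℕ → ℂ) (T : ℕ → ℕ → ℂ)
    (hT0 : ∀ j : ℕ, j < N * ℓ → T 0 j = (j : ℂ) * γ)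
    (h1 : theta τ (-(γ * (ℓ : ℂ))) ≠ 0) (h2 : theta τ (γ * (ℓ : ℂ)) ≠ 0)
    (h3 : ∀ m : ℕ, m < (N - 1) * ℓ →
      theta τ (T 1 m) ≠ 0 ∧ theta τ (- T 1 m) ≠ 0)
    (h4 : ∀ n k : ℕ, 1 ≤ n → n ≤ N - 1 → k < (N - n) * ℓ →
      theta τ (0 - T n k) ≠ 0 ∧ theta τ (0 - T n k - γ) ≠ 0)
    (h5 : ∀ k : ℕ, k < N * ℓ → theta τ (0 - T 0 k - γ) ≠ 0) :
    theta τ (0 - γ * ((N * ℓ : ℕ) : ℂ)) / theta τ (0 - γ * (ℓ : ℂ)) *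
        eps1 τ γ N ℓ cs T 0
      = Complex.exp (-(γ * cs 0)) *
          (theta τ (γ * ((N * ℓ : ℕ) : ℂ)) / theta τ (γ * (ℓ : ℂ))) *
          ∏ m ∈ Finset.range ((N - 1) * ℓ),
            theta τ (T 1 m - γ) / theta τ (T 1 m) := by
  have hpos : 0 < N * ℓ := by positivity
  have hT00 : T 0 0 = 0 := by simpa using hT0 0 hpos
  have heps : eps1 τ γ N ℓ cs T 0 = Complex.exp (-(γ * cs 0)) *
      ∏ m ∈ Finset.range ((N - 1) * ℓ), theta τ (T 1 m - γ) / theta τ (T 1 m) := by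
    unfold eps1
    rw [Finset.sum_eq_single 1]
    · simp only [Nat.sub_self, Finset.Icc_eq_empty_of_lt Nat.zero_lt_one, Finset.prod_empty,
        mul_one]
      congr 1
      refine Finset.prod_congr rfl fun m _ => ?_
      rw [← theta_neg_div_neg τ (T 1 m - γ)]
      congr 2 <;> ring
    · intro i hi hi1
      rw [Finset.mem_Icc] at hi
      have hmem : 1 ∈ Finset.Icc 1 (i - 1) := Finset.mem_Icc.mpr ⟨le_rfl, by omega⟩
      have hm : 0 ∈ Finset.range ((N - 1 + 1) * ℓ) := by
        rw [Nat.sub_add_cancel (by omega)]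
        exact Finset.mem_range.mpr hpos
      refine mul_eq_zero_of_right _ (Finset.prod_eq_zero hmem ?_)
      refine mul_eq_zero_of_right _ (Finset.prod_eq_zero hm ?_)
      rw [Nat.sub_self, hT00, sub_zero, theta_zero, zero_div]
    · intro h
      exact absurd (Finset.mem_Icc.mpr ⟨le_rfl, by omega⟩) h
  rw [heps, zero_sub, zero_sub, theta_neg_div_neg]
  ring
end Ruijsenaars
end
end
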